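/- arXiv:1207.4047 — 2 statements merged into one kernel-verified Lean document; each statement's English description precedes it below -/
import Mathlib

section
/- Let x be a proper rational parametrization of an infinite rational curve C ⊆ ℝⁿ that is not contained in any affine hyperplane of ℝⁿ, let f be an isometry of ℝⁿ and φ a real Möbius transformation such that f(x(t)) = x(φ(t)) for all but finitely many t ∈ ℝ. Then for every positive integer k, the k-fold composition f^k is the identity of ℝⁿ if and only if the k-fold composition φ^k is the identity map of ℝ (where defined). -/
open Polynomial Matrix RealInnerProductSpace

noncomputable section

/-- A rational parametrization of a curve in `ℝⁿ`: components `pᵢ/qᵢ` with `qᵢ ≠ 0` and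
`gcd(pᵢ, qᵢ) = 1`. -/
structure RatParam (n : ℕ) where
  p : Fin n → Polynomial ℝ
  q : Fin n → Polynomial ℝ
  q_ne_zero : ∀ i, q i ≠ 0
  coprime : ∀ i, IsCoprime (p i) (q i)

namespace RatParam

variable {n : ℕ}

/-- The (cofinite) set of parameters where the parametrization is defined. -/
def domain (X : RatParam n) : Set ℝ := {t | ∀ i, (X.q i).eval t ≠ 0}

/-- The value of the parametrization at a parameter `t`. -/
def eval (X : RatParam n) (t : ℝ) : EuclideanSpace ℝ (Fin n) :=
  WithLp.toLp 2 fun i => (X.p i).eval t / (X.q i).eval t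

/-- The associated rational curve: the image of the parametrization over its domain. -/
def curve (X : RatParam n) : Set (EuclideanSpace ℝ (Fin n)) := X.eval '' X.domain

/-- A parametrization is proper if it is injective outside some finite set of parameters. -/
def Proper (X : RatParam n) : Prop :=
  ∃ F : Set ℝ, F.Finite ∧ Set.InjOn X.eval (X.domain \ F)

end RatParam

/-- A real Möbius transformation `t ↦ (a t + b)/(c t + d)` with `a d - b c ≠ 0`. -/
structure Mobius where
  a : ℝ
  b : ℝ
  c : ℝ
  d : ℝ
  det_ne_zero : a * d - b * c ≠ 0

namespace Mobius

/-- The value of the Möbius transformation at `t`. -/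
def eval (φ : Mobius) (t : ℝ) : ℝ := (φ.a * t + φ.b) / (φ.c * t + φ.d)

/-- The set of parameters where the Möbius transformation is defined. -/
def domain (φ : Mobius) : Set ℝ := {t | φ.c * t + φ.d ≠ 0}

/-- A Möbius transformation is trivial if it is the identity map (where defined). -/
def IsTrivial (φ : Mobius) : Prop := ∀ t ∈ φ.domain, φ.eval t = t

/-- The identity Möbius transformation. -/
def one : Mobius := ⟨1, 0, 0, 1, by norm_num⟩

/-- Composition of Möbius transformations (via multiplication of coefficient matrices). -/
def comp (φ ψ : Mobius) : Mobius where
  a := φ.a * ψ.a + φ.b * ψ.c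
  b := φ.a * ψ.b + φ.b * ψ.d
  c := φ.c * ψ.a + φ.d * ψ.c
  d := φ.c * ψ.b + φ.d * ψ.d
  det_ne_zero := by
    have h : (φ.a * ψ.a + φ.b * ψ.c) * (φ.c * ψ.b + φ.d * ψ.d) -
        (φ.a * ψ.b + φ.b * ψ.d) * (φ.c * ψ.a + φ.d * ψ.c) =
        (φ.a * φ.d - φ.b * φ.c) * (ψ.a * ψ.d - ψ.b * ψ.c) := by ring
    rw [h]
    exact mul_ne_zero φ.det_ne_zero ψ.det_ne_zero

/-- The `k`-fold composition of a Möbius transformation with itself. -/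
def pow (φ : Mobius) : ℕ → Mobius
  | 0 => one
  | k + 1 => (pow φ k).comp φ

end Mobius

/-!
Call two functions on `ℝ` equal when they agree outside a finite set. In this sense
`f ∘ x = x ∘ φ`, and since preimages of finite sets under `φ` are finite, `f^k ∘ x = x ∘ φ^k`. If
`f^k` is the identity, properness cancels `x` from `x = x ∘ φ^k`. If `φ^k` is the identity, then
`f^k` fixes `x(t)` for all but finitely many `t`, hence by continuity every point of the curve; but
an isometry `g` moving a point `y` has all its fixed points on the perpendicular bisector of `y` and
`g y`, which is a hyperplane.
-/

section Cofinite

open Filter Topology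

theorem iterate_comp_eventuallyEq_comp_iterate {α β : Type*} {l : Filter α} {f : β → β} {g : α → α}
    {x : α → β} (hg : Tendsto g l l) (h : f ∘ x =ᶠ[l] x ∘ g) :
    ∀ k : ℕ, f^[k] ∘ x =ᶠ[l] x ∘ g^[k]
  | 0 => .rfl
  | k + 1 =>
    calc f^[k + 1] ∘ x
      _ =ᶠ[l] (f^[k] ∘ x) ∘ g := h.fun_comp f^[k]
      _ =ᶠ[l] x ∘ g^[k + 1] := (iterate_comp_eventuallyEq_comp_iterate hg h k).comp_tendsto hg

theorem eq_of_eventuallyEq_cofinite {α β : Type*} [TopologicalSpace α] [T1Space α]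
    [TopologicalSpace β] [T2Space β] {u v : α → β} {a : α} [(𝓝[≠] a).NeBot]
    (hu : ContinuousAt u a) (hv : ContinuousAt v a) (h : u =ᶠ[cofinite] v) : u a = v a :=
  ((hu.eventuallyEq_nhds_iff_eventuallyEq_nhdsNE hv).1
    (h.filter_mono (nhdsNE_le_cofinite a))).eq_of_nhds

end Cofinite

section Isometry

theorem isometry_iterate {α : Type*} [PseudoEMetricSpace α] {g : α → α} (hg : Isometry g) :
    ∀ k : ℕ, Isometry g^[k]
  | 0 => isometry_id
  | k + 1 => (isometry_iterate hg k).comp hg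

theorem mem_perpBisector_of_isFixedPt {V P : Type*} [NormedAddCommGroup V] [InnerProductSpace ℝ V]
    [MetricSpace P] [NormedAddTorsor V P] {g : P → P} (hg : Isometry g) {z : P}
    (hz : Function.IsFixedPt g z) (y : P) : z ∈ AffineSubspace.perpBisector y (g y) := by
  rw [AffineSubspace.mem_perpBisector_iff_dist_eq]
  calc dist z y = dist (g z) (g y) := (hg.dist_eq z y).symm
    _ = dist z (g y) := by rw [hz]

theorem eq_id_of_forall_isFixedPt_of_not_subset_hyperplane {V : Type*} [NormedAddCommGroup V]
    [InnerProductSpace ℝ V] {g : V → V} (hg : Isometry g) {S : Set V}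
    (hS : ¬ ∃ (v : V) (r : ℝ), v ≠ 0 ∧ ∀ z ∈ S, ⟪z, v⟫ = r)
    (hfix : ∀ z ∈ S, Function.IsFixedPt g z) : g = id := by
  by_contra hne
  obtain ⟨y, hy⟩ := Function.ne_iff.1 hne
  refine hS ⟨g y - y, dist y (g y) ^ 2 / 2 + ⟪y, g y - y⟫, sub_ne_zero.2 hy, fun z hz => ?_⟩
  have hbisect : ⟪z - y, g y - y⟫ = dist y (g y) ^ 2 / 2 :=
    AffineSubspace.mem_perpBisector_iff_inner_eq.1 (mem_perpBisector_of_isFixedPt hg (hfix z hz) y)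
  rw [← hbisect, ← inner_add_left, sub_add_cancel]

end Isometry

namespace Mobius

open Filter

theorem finite_compl_domain (φ : Mobius) : φ.domainᶜ.Finite := by
  refine Set.Subsingleton.finite fun s hs t ht => ?_
  simp only [domain, Set.mem_compl_iff, Set.mem_ofPred_eq, not_not] at hs ht
  have hdet : (φ.a * φ.d - φ.b * φ.c) * (s - t) = 0 := by
    linear_combination (φ.a * s + φ.b) * ht - (φ.a * t + φ.b) * hs
  exact sub_eq_zero.1 ((mul_eq_zero.1 hdet).resolve_left φ.det_ne_zero)

theorem eventually_mem_domain (φ : Mobius) : ∀ᶠ t in cofinite, t ∈ φ.domain :=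
  φ.finite_compl_domain

theorem injOn_eval (φ : Mobius) : Set.InjOn φ.eval φ.domain := by
  intro s hs t ht hst
  rw [eval, eval, div_eq_div_iff hs ht] at hst
  have hdet : (φ.a * φ.d - φ.b * φ.c) * (s - t) = 0 := by linear_combination hst
  exact sub_eq_zero.1 ((mul_eq_zero.1 hdet).resolve_left φ.det_ne_zero)

theorem tendsto_eval_cofinite (φ : Mobius) : Tendsto φ.eval cofinite cofinite := by
  refine .cofinite_of_finite_preimage_singleton fun y => ?_
  have hfiber : (φ.eval ⁻¹' {y} ∩ φ.domain).Subsingleton := fun s hs t ht =>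
    φ.injOn_eval hs.2 ht.2 (hs.1.trans ht.1.symm)
  refine (hfiber.finite.union φ.finite_compl_domain).subset fun t ht => ?_
  by_cases hdom : t ∈ φ.domain
  exacts [.inl ⟨ht, hdom⟩, .inr hdom]

theorem continuousAt_eval (φ : Mobius) {t : ℝ} (ht : t ∈ φ.domain) : ContinuousAt φ.eval t :=
  ContinuousAt.div (by fun_prop) (by fun_prop) ht

theorem isTrivial_iff_eventuallyEq_id (φ : Mobius) :
    φ.IsTrivial ↔ φ.eval =ᶠ[cofinite] id :=
  ⟨fun h => φ.eventually_mem_domain.mono h, fun h _ ht =>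
    eq_of_eventuallyEq_cofinite (φ.continuousAt_eval ht) continuousAt_id h⟩

theorem eval_comp (φ ψ : Mobius) {t : ℝ} (ht : t ∈ ψ.domain) :
    (φ.comp ψ).eval t = φ.eval (ψ.eval t) := by
  have hψ : ψ.c * t + ψ.d ≠ 0 := ht
  have hcancel : ψ.eval t * (ψ.c * t + ψ.d) = ψ.a * t + ψ.b := div_mul_cancel₀ _ hψ
  have hnum : (φ.comp ψ).a * t + (φ.comp ψ).b = (φ.a * ψ.eval t + φ.b) * (ψ.c * t + ψ.d) := by
    simp only [comp]
    linear_combination -φ.a * hcancel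
  have hden : (φ.comp ψ).c * t + (φ.comp ψ).d = (φ.c * ψ.eval t + φ.d) * (ψ.c * t + ψ.d) := by
    simp only [comp]
    linear_combination -φ.c * hcancel
  -- If `t` is a pole of `φ.comp ψ`, both sides take the junk value `0`.
  rw [eval, hnum, hden, mul_div_mul_right _ _ hψ, ← eval]

theorem eval_pow_eventuallyEq (φ : Mobius) :
    ∀ k : ℕ, (φ.pow k).eval =ᶠ[cofinite] φ.eval^[k]
  | 0 => .of_eq <| funext fun t => by simp [pow, one, eval]
  | k + 1 =>
    calc (φ.pow (k + 1)).eval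
      _ =ᶠ[cofinite] (φ.pow k).eval ∘ φ.eval :=
        φ.eventually_mem_domain.mono fun _ => (φ.pow k).eval_comp φ
      _ =ᶠ[cofinite] φ.eval^[k + 1] :=
        (φ.eval_pow_eventuallyEq k).comp_tendsto φ.tendsto_eval_cofinite

end Mobius

namespace RatParam

open Filter

variable {n : ℕ} {X : RatParam n}

theorem eventually_mem_domain (X : RatParam n) : ∀ᶠ t in cofinite, t ∈ X.domain :=
  eventually_all.2 fun i => eventually_cofinite.2 <| by
    simpa only [not_not, IsRoot.def] using Polynomial.finite_setOfPred_isRoot (X.q_ne_zero i)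

theorem continuousAt_eval {t : ℝ} (ht : t ∈ X.domain) : ContinuousAt X.eval t :=
  (PiLp.continuous_toLp 2 _).continuousAt.comp <| continuousAt_pi.2 fun i =>
    (X.p i).continuousAt.div (X.q i).continuousAt (ht i)

theorem Proper.eventuallyEq_of_comp {α : Type*} {l : Filter α} {u v : α → ℝ} (hX : X.Proper)
    (hu : Tendsto u l cofinite) (hv : Tendsto v l cofinite)
    (h : X.eval ∘ u =ᶠ[l] X.eval ∘ v) : u =ᶠ[l] v := by
  obtain ⟨F, hF, hinj⟩ := hX
  have hgood : ∀ᶠ t in cofinite, t ∈ X.domain \ F :=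
    X.eventually_mem_domain.and hF.eventually_cofinite_notMem
  filter_upwards [h, hu.eventually hgood, hv.eventually hgood] with a ha hua hva
  exact hinj hua hva ha

theorem isFixedPt_of_comp_eval_eventuallyEq
    {g : EuclideanSpace ℝ (Fin n) → EuclideanSpace ℝ (Fin n)}
    (hg : Continuous g) (h : g ∘ X.eval =ᶠ[cofinite] X.eval) {y : EuclideanSpace ℝ (Fin n)}
    (hy : y ∈ X.curve) : Function.IsFixedPt g y := by
  obtain ⟨t, ht, rfl⟩ := hy
  exact eq_of_eventuallyEq_cofinite (hg.continuousAt.comp (continuousAt_eval ht))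
    (continuousAt_eval ht) h

theorem iterate_comp_eval_eventuallyEq
    {f : EuclideanSpace ℝ (Fin n) → EuclideanSpace ℝ (Fin n)} {φ : Mobius}
    (h : f ∘ X.eval =ᶠ[cofinite] X.eval ∘ φ.eval) (k : ℕ) :
    f^[k] ∘ X.eval =ᶠ[cofinite] X.eval ∘ (φ.pow k).eval :=
  (iterate_comp_eventuallyEq_comp_iterate φ.tendsto_eval_cofinite h k).trans
    ((φ.eval_pow_eventuallyEq k).fun_comp X.eval).symm

end RatParam

/-- Let `x` be a proper rational parametrization of an infinite rational curve
`C ⊆ ℝⁿ` not contained in any affine hyperplane of `ℝⁿ`, let `f` be an isometry of `ℝⁿ` and `φ`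
a real Möbius transformation such that `f(x(t)) = x(φ(t))` for all but finitely many `t ∈ ℝ`.
Then for every positive integer `k`, the `k`-fold composition `f^k` is the identity of `ℝⁿ` if
and only if the `k`-fold composition `φ^k` is the identity map of `ℝ` (where defined). -/
theorem statement_2 {n : ℕ} (X : RatParam n) (hX : X.Proper)
    (C : Set (EuclideanSpace ℝ (Fin n))) (hC : C = X.curve) (hCinf : C.Infinite)
    (hhyp : ¬ ∃ (v : EuclideanSpace ℝ (Fin n)) (r : ℝ), v ≠ 0 ∧ ∀ y ∈ C, ⟪y, v⟫ = r)
    (f : EuclideanSpace ℝ (Fin n) → EuclideanSpace ℝ (Fin n))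
    (hf : Isometry f) (hbij : Function.Bijective f) (φ : Mobius)
    (heq : {t : ℝ | t ∈ φ.domain ∧ t ∈ X.domain ∧ φ.eval t ∈ X.domain ∧
      f (X.eval t) = X.eval (φ.eval t)}ᶜ.Finite) :
    ∀ k : ℕ, 1 ≤ k → (f^[k] = id ↔ (φ.pow k).IsTrivial) := by
  intro k _
  have hconj : f ∘ X.eval =ᶠ[Filter.cofinite] X.eval ∘ φ.eval :=
    Filter.mem_of_superset (Filter.mem_cofinite.2 heq) fun _ ht => ht.2.2.2
  have hconj_pow := RatParam.iterate_comp_eval_eventuallyEq hconj k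
  rw [Mobius.isTrivial_iff_eventuallyEq_id]
  constructor
  · intro hid
    rw [hid, Function.id_comp] at hconj_pow
    exact (hX.eventuallyEq_of_comp Filter.tendsto_id (φ.pow k).tendsto_eval_cofinite hconj_pow).symm
  · intro htriv
    have hiso : Isometry f^[k] := isometry_iterate hf k
    have hcurve : f^[k] ∘ X.eval =ᶠ[Filter.cofinite] X.eval :=
      hconj_pow.trans (htriv.fun_comp X.eval)
    refine eq_id_of_forall_isFixedPt_of_not_subset_hyperplane hiso hhyp fun y hy => ?_
    exact RatParam.isFixedPt_of_comp_eval_eventuallyEq hiso.continuous hcurve (hC ▸ hy)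
end
end

section
/- Let C ⊆ ℝ³ be an infinite rational space curve that is not a line. If the central inversions with centers P₁ and P₂ (the maps x ↦ 2P₁ − x and x ↦ 2P₂ − x) both map C onto itself, then P₁ = P₂. In other words, C is invariant under at most one central inversion. -/
open Polynomial Matrix RealInnerProductSpace

noncomputable section

/-- A line in `ℝⁿ`: a one-dimensional affine subspace, as a set. -/
def IsLine {n : ℕ} (S : Set (EuclideanSpace ℝ (Fin n))) : Prop :=
  ∃ (p v : EuclideanSpace ℝ (Fin n)), v ≠ 0 ∧ S = {x | ∃ s : ℝ, x = p + s • v}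

/-!
The composition of the two central inversions is the translation by `2 (P₂ - P₁)`, so if
`P₁ ≠ P₂` the curve is periodic in a nonzero direction `v`. It then meets the line through one of
its points in direction `v` infinitely often, and a rational curve meeting an affine subspace
infinitely often lies in it. To see that it fills the line, note that the domain falls into
finitely many intervals, so one of them carries two points differing by a nonzero multiple of
`v`; by the intermediate value theorem the curve contains the segment between them, and the
translates of this segment cover the line.
-/

theorem sub_mem_iff_of_image_sub_eq {G : Type*} [AddCommGroup G] {C : Set G} {a : G}
    (h : (fun x => a - x) '' C = C) (x : G) : a - x ∈ C ↔ x ∈ C := by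
  conv_lhs => rw [← h]
  exact sub_right_injective.mem_set_image

theorem periodic_mem_of_image_sub_eq {G : Type*} [AddCommGroup G] {C : Set G} {a b : G}
    (ha : (fun x => a - x) '' C = C) (hb : (fun x => b - x) '' C = C) :
    Function.Periodic (· ∈ C) (b - a) := fun x => propext <| calc
  x + (b - a) ∈ C ↔ b - (a - x) ∈ C := by rw [show x + (b - a) = b - (a - x) by abel]
  _ ↔ a - x ∈ C := sub_mem_iff_of_image_sub_eq hb (a - x)
  _ ↔ x ∈ C := sub_mem_iff_of_image_sub_eq ha x

theorem exists_ne_uIcc_subset_of_finite_compl {α ι : Type*} [LinearOrder α] [Infinite ι]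
    {D : Set α} (hD : Dᶜ.Finite) {T : ι → α} (hT : ∀ i, T i ∈ D) :
    ∃ i j, i ≠ j ∧ Set.uIcc (T i) (T j) ⊆ D := by
  have : Finite ↥Dᶜ := hD
  -- Two indices with the same set of removed points to their left lie in the same gap.
  obtain ⟨i, j, hij, hcut⟩ :=
    Finite.exists_ne_map_eq_of_infinite fun i => {g : ↥Dᶜ | g.1 < T i}
  refine ⟨i, j, hij, fun t ht => by_contra fun htD => ?_⟩
  have hlt : t < T i ↔ t < T j := Set.ext_iff.mp hcut ⟨t, htD⟩
  have hne (k : ι) : t ≠ T k := fun h => htD (h ▸ hT k)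
  rcases Set.mem_uIcc.mp ht with ⟨hi, hj⟩ | ⟨hj, hi⟩
  · exact hi.not_gt (hlt.mpr (hj.lt_of_ne (hne j)))
  · exact hj.not_gt (hlt.mp (hi.lt_of_ne (hne i)))

theorem image_eq_univ_of_periodic_mem {α β : Type*} [ConditionallyCompleteLinearOrder α]
    [TopologicalSpace α] [OrderTopology α] [DenselyOrdered α] [AddCommGroup β] [LinearOrder β]
    [IsOrderedAddMonoid β] [Archimedean β] [TopologicalSpace β] [OrderClosedTopology β]
    {D : Set α} {f : α → β} {c : β}
    (hD : Dᶜ.Finite) (hne : D.Nonempty) (hf : ContinuousOn f D) (hc : 0 < c)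
    (hper : Function.Periodic (· ∈ f '' D) c) : f '' D = Set.univ := by
  obtain ⟨t₀, ht₀⟩ := hne
  have hmem (k : ℤ) : f t₀ + k • c ∈ f '' D :=
    (hper.zsmul k (f t₀)).mpr (Set.mem_image_of_mem f ht₀)
  choose T hTD hT using hmem
  obtain ⟨k, l, hkl, hI⟩ : ∃ k l : ℤ, k < l ∧ Set.uIcc (T k) (T l) ⊆ D := by
    obtain ⟨k, l, hkl, hI⟩ := exists_ne_uIcc_subset_of_finite_compl hD hTD
    rcases hkl.lt_or_gt with h | h
    · exact ⟨k, l, h, hI⟩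
    · exact ⟨l, k, h, Set.uIcc_comm (T k) (T l) ▸ hI⟩
  have hsegment : Set.Icc (f t₀ + k • c) (f t₀ + l • c) ⊆ f '' D := by
    rw [← hT k, ← hT l]
    exact Set.Icc_subset_uIcc.trans <|
      (intermediate_value_uIcc (hf.mono hI)).trans (Set.image_mono hI)
  have hlength : f t₀ + k • c + c ≤ f t₀ + l • c := by
    rw [add_assoc, ← add_one_zsmul]
    gcongr
    exact hkl
  refine Set.eq_univ_of_forall fun y => ?_
  obtain ⟨z, hz, hyz⟩ := hper.exists_mem_Ico hc y (f t₀ + k • c)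
  exact hyz.mpr (hsegment ⟨hz.1, hz.2.le.trans hlength⟩)

namespace RatParam

variable {n : ℕ} (X : RatParam n)

theorem finite_compl_domain : X.domainᶜ.Finite := by
  have hroots : X.domainᶜ = ⋃ i, {t | (X.q i).IsRoot t} := by
    ext t
    simp [domain]
  rw [hroots]
  exact Set.finite_iUnion fun i => finite_setOfPred_isRoot (X.q_ne_zero i)

theorem domain_nonempty : X.domain.Nonempty :=
  compl_compl X.domain ▸ X.finite_compl_domain.infinite_compl.nonempty

theorem continuousOn_eval : ContinuousOn X.eval X.domain :=
  (PiLp.continuous_toLp 2 _).comp_continuousOn <| continuousOn_pi.mpr fun i =>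
    (X.p i).continuousOn.div (X.q i).continuousOn fun _ ht => ht i

theorem exists_inner_eval_eq_div (w : EuclideanSpace ℝ (Fin n)) :
    ∃ N D : Polynomial ℝ, ∀ t ∈ X.domain,
      D.eval t ≠ 0 ∧ ⟪w, X.eval t⟫ = N.eval t / D.eval t := by
  refine ⟨∑ i, Polynomial.C (w i) * X.p i * ∏ j ∈ Finset.univ.erase i, X.q j, ∏ i, X.q i,
    fun t ht => ?_⟩
  have hD : ∏ i, (X.q i).eval t ≠ 0 := Finset.prod_ne_zero_iff.mpr fun i _ => ht i
  simp only [eval_prod, eval_finsetSum, eval_mul, eval_C, PiLp.inner_apply]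
  refine ⟨hD, (eq_div_iff hD).mpr ?_⟩
  rw [Finset.sum_mul]
  refine Finset.sum_congr rfl fun i hi => ?_
  have hqi : (X.q i).eval t ≠ 0 := ht i
  rw [← Finset.mul_prod_erase _ _ hi]
  simp only [eval, RCLike.inner_apply, conj_trivial]
  field_simp

variable {X}

theorem inner_eval_eq_of_infinite {w : EuclideanSpace ℝ (Fin n)} {c : ℝ}
    (h : {t ∈ X.domain | ⟪w, X.eval t⟫ = c}.Infinite) {t : ℝ} (ht : t ∈ X.domain) :
    ⟪w, X.eval t⟫ = c := by
  obtain ⟨N, D, hND⟩ := X.exists_inner_eval_eq_div w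
  have hroot (s : ℝ) (hs : s ∈ X.domain) :
      (N - Polynomial.C c * D).IsRoot s ↔ ⟪w, X.eval s⟫ = c := by
    obtain ⟨hD, hN⟩ := hND s hs
    rw [hN, div_eq_iff hD, IsRoot.def, eval_sub, eval_mul, eval_C, sub_eq_zero]
  have hzero : N - Polynomial.C c * D = 0 :=
    eq_zero_of_infinite_isRoot _ (h.mono fun s hs => (hroot s hs.1).mpr hs.2)
  exact (hroot t ht).mp (by simp [hzero])

theorem curve_subset_of_infinite_inter {A : AffineSubspace ℝ (EuclideanSpace ℝ (Fin n))}
    (h : (X.curve ∩ A).Infinite) : X.curve ⊆ A := by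
  obtain ⟨x₀, -, hx₀⟩ := h.nonempty
  have hparam : (X.domain ∩ X.eval ⁻¹' A).Infinite :=
    .of_image X.eval (by rwa [Set.image_inter_preimage])
  rintro _ ⟨t, ht, rfl⟩
  rw [SetLike.mem_coe, ← A.vsub_right_mem_direction_iff_mem hx₀,
    ← A.direction.orthogonal_orthogonal, Submodule.mem_orthogonal]
  intro w hw
  rw [vsub_eq_sub, inner_sub_right, sub_eq_zero]
  refine inner_eval_eq_of_infinite (hparam.mono fun s hs => ⟨hs.1, ?_⟩) ht
  rw [← sub_eq_zero, ← inner_sub_right]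
  exact Submodule.inner_left_of_mem_orthogonal (A.vsub_mem_direction hs.2 hx₀) hw

theorem curve_subset_mk'_of_periodic_mem {v x₀ : EuclideanSpace ℝ (Fin n)} (hv : v ≠ 0)
    (hper : Function.Periodic (· ∈ X.curve) v) (hx₀ : x₀ ∈ X.curve) :
    X.curve ⊆ AffineSubspace.mk' x₀ (ℝ ∙ v) := by
  have : IsAddTorsionFree (EuclideanSpace ℝ (Fin n)) := .of_module_rat _
  have hinf : (Set.range fun k : ℕ => x₀ + k • v).Infinite :=
    (infinite_range_add_nsmul_iff x₀ v).mpr hv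
  refine curve_subset_of_infinite_inter (hinf.mono ?_)
  rintro _ ⟨k, rfl⟩
  refine ⟨(hper.nsmul k x₀).mpr hx₀, ?_⟩
  rw [SetLike.mem_coe, AffineSubspace.mem_mk', vsub_eq_sub, add_sub_cancel_left]
  exact nsmul_mem (Submodule.mem_span_singleton_self v) k

theorem isLine_curve_of_periodic_mem {v : EuclideanSpace ℝ (Fin n)} (hv : v ≠ 0)
    (hper : Function.Periodic (· ∈ X.curve) v) : IsLine X.curve := by
  obtain ⟨x₀, hx₀⟩ : X.curve.Nonempty := X.domain_nonempty.image X.eval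
  obtain ⟨ℓ, hℓ⟩ := SeparatingDual.exists_eq_one (R := ℝ) hv
  have hcoord {x} (hx : x ∈ X.curve) : x = x₀ + ℓ (x - x₀) • v := by
    obtain ⟨s, hs⟩ := Submodule.mem_span_singleton.mp <|
      AffineSubspace.mem_mk'.mp (curve_subset_mk'_of_periodic_mem hv hper hx₀ hx)
    rw [vsub_eq_sub] at hs
    rw [← hs, map_smul, hℓ, smul_eq_mul, mul_one, hs, add_sub_cancel]
  set f : ℝ → ℝ := fun t => ℓ (X.eval t - x₀) with hf
  have hmem (s : ℝ) : s ∈ f '' X.domain ↔ x₀ + s • v ∈ X.curve := by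
    constructor
    · rintro ⟨t, ht, rfl⟩
      have hx := Set.mem_image_of_mem X.eval ht
      exact hcoord hx ▸ hx
    · rintro ⟨t, ht, hts⟩
      exact ⟨t, ht, by simp [hf, hts, hℓ]⟩
  have hfper : Function.Periodic (· ∈ f '' X.domain) 1 := fun s => propext <| calc
    s + 1 ∈ f '' X.domain ↔ x₀ + s • v + v ∈ X.curve := by
      rw [hmem, add_smul, one_smul, add_assoc]
    _ ↔ x₀ + s • v ∈ X.curve := (hper _).to_iff
    _ ↔ s ∈ f '' X.domain := (hmem s).symm
  have hfcont : ContinuousOn f X.domain :=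
    ℓ.continuous.comp_continuousOn (X.continuousOn_eval.sub continuousOn_const)
  have hfuniv : f '' X.domain = Set.univ :=
    image_eq_univ_of_periodic_mem X.finite_compl_domain X.domain_nonempty hfcont one_pos hfper
  refine ⟨x₀, v, hv, Set.Subset.antisymm (fun x hx => ⟨_, hcoord hx⟩) ?_⟩
  rintro _ ⟨s, rfl⟩
  exact (hmem s).mp (hfuniv ▸ Set.mem_univ s)

end RatParam

theorem statement_5_general {n : ℕ} (X : RatParam n) (hline : ¬ IsLine X.curve)
    (P₁ P₂ : EuclideanSpace ℝ (Fin n))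
    (h₁ : (fun x => (2 : ℝ) • P₁ - x) '' X.curve = X.curve)
    (h₂ : (fun x => (2 : ℝ) • P₂ - x) '' X.curve = X.curve) :
    P₁ = P₂ := by
  by_contra hne
  have htranslation : (2 : ℝ) • P₂ - (2 : ℝ) • P₁ ≠ 0 :=
    sub_ne_zero.mpr ((smul_right_injective _ two_ne_zero).ne (Ne.symm hne))
  exact hline (RatParam.isLine_curve_of_periodic_mem htranslation
    (periodic_mem_of_image_sub_eq h₁ h₂))

/-- Let `C ⊆ ℝ³` be an infinite rational space curve that is not a line. If the
central inversions with centers `P₁` and `P₂` (the maps `x ↦ 2P₁ − x` and `x ↦ 2P₂ − x`) both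
map `C` onto itself, then `P₁ = P₂`. -/
theorem statement_5 (X : RatParam 3) (C : Set (EuclideanSpace ℝ (Fin 3)))
    (hC : C = X.curve) (hCinf : C.Infinite) (hline : ¬ IsLine C)
    (P₁ P₂ : EuclideanSpace ℝ (Fin 3))
    (h₁ : (fun x => (2 : ℝ) • P₁ - x) '' C = C)
    (h₂ : (fun x => (2 : ℝ) • P₂ - x) '' C = C) :
    P₁ = P₂ := by
  subst hC
  exact statement_5_general X hline P₁ P₂ h₁ h₂
end
end
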